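/- For all integers b, c ≥ 0, the polynomial Q_{b,c} satisfies the q-difference equation E53: −x·y·q^{−2(b+2c)}·Q_{b,c}(x,y,z,q²w) + (x−1)·Q_{b,c}(q^{−4}x,q²y,z,w) + x·(y−1)·q^{−4c}·Q_{b,c}(x,q^{−2}y,q⁴z,w) + Q_{b,c}(x,y,z,w) = 0. -/

import Mathlib

noncomputable section

open MvPolynomial

/-- The field `K = ℚ(q)` of rational functions in `q` over `ℚ`. -/
abbrev K : Type := RatFunc ℚ

/-- The variable `q ∈ K = ℚ(q)`. -/
def q : K := RatFunc.X

/-- The polynomial ring `K[x,y,z,w]`. -/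
abbrev P4 : Type := MvPolynomial (Fin 4) K

def xP : P4 := X 0
def yP : P4 := X 1
def zP : P4 := X 2
def wP : P4 := X 3

/-- The `K`-algebra map `K[x,y,z,w] → K[x,y,z,w]` rescaling the variables:
`x ↦ q^a·x`, `y ↦ q^b·y`, `z ↦ q^c·z`, `w ↦ q^d·w`. -/
def scl (a b c d : ℤ) : P4 →ₐ[K] P4 :=
  aeval ![C (q ^ a) * X 0, C (q ^ b) * X 1, C (q ^ c) * X 2, C (q ^ d) * X 3]

/-- The polynomials `Q_{b,0}(x,y,z,w)`, defined by the recursion (rec1) of the paper. -/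
def Qb0 : ℕ → P4
  | 0 => 1
  | b + 1 =>
      C (q ^ (4 * (b : ℤ))) * wP * yP * (zP - 1) * scl 0 0 (-4) 0 (Qb0 b)
    + C (q ^ (4 * (b : ℤ))) * wP * xP * (yP - 1) * yP * zP * scl 0 (-2) 0 0 (Qb0 b)
    + C (q ^ (6 * (b : ℤ))) * (wP - 1) * (yP - 1) * scl 0 (-2) 0 (-2) (Qb0 b)
    + C (q ^ (4 * (b : ℤ))) * wP * (xP - 1) * yP * (zP - 1) * scl (-4) 2 (-4) 0 (Qb0 b)
    + C (q ^ (6 * (b : ℤ))) * (wP - 1) * (xP - 1) * yP * scl (-4) 0 0 (-2) (Qb0 b)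

/-- The polynomials `Q_{b,c}(x,y,z,w)`: for `c ≥ 1` they are defined by the
recursion (rec2) of the paper, lowering `c`; for `c = 0` by `Qb0`. -/
def Q : ℕ → ℕ → P4
  | b, 0 => Qb0 b
  | b, c + 1 =>
      - (C (q ^ (4 * (b : ℤ) + 8 * (c : ℤ))) * wP ^ 2 * yP * (zP - 1) * zP)
          * scl 0 0 (-4) 0 (Q b c)
    + (C (q ^ (4 * (b : ℤ) + 4 * (c : ℤ) - 2)) * wP * xP * (yP - 1) * zP)
          * (C (q ^ (2 * (b : ℤ) + 4 * (c : ℤ) + 4)) - C (q ^ (2 : ℤ)) * wP * yP * zP)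
          * scl 0 (-2) 0 0 (Q b c)
    - (C (q ^ (6 * (b : ℤ) + 8 * (c : ℤ))) * (wP - 1) * wP * (yP - 1) * zP)
          * scl 0 (-2) 0 (-2) (Q b c)
    + (C (q ^ (4 * (b : ℤ) + 8 * (c : ℤ) - 2)) * wP * (xP - 1) * (zP - 1))
          * (C (q ^ (2 * (b : ℤ) + 4 * (c : ℤ) + 4)) - C (q ^ (2 : ℤ)) * wP * yP * zP)
          * scl (-4) 2 (-4) 0 (Q b c)
    + (C (q ^ (6 * (b : ℤ) + 8 * (c : ℤ) - 2)) * (wP - 1) * (xP - 1))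
          * (C (q ^ (2 * (b : ℤ) + 4 * (c : ℤ) + 4)) - C (q ^ (2 : ℤ)) * wP * yP * zP)
          * scl (-4) 0 0 (-2) (Q b c)

theorem q_ne : q ≠ 0 := RatFunc.X_ne_zero

theorem scl_C (a b c d : ℤ) (r : K) : scl a b c d (C r) = C r := by
  simp [scl, MvPolynomial.algebraMap_eq]

theorem scl_x (a b c d : ℤ) : scl a b c d xP = C (q ^ a) * xP := by
  simp [scl, xP]
theorem scl_y (a b c d : ℤ) : scl a b c d yP = C (q ^ b) * yP := by
  simp [scl, yP]
theorem scl_z (a b c d : ℤ) : scl a b c d zP = C (q ^ c) * zP := by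
  simp [scl, zP]
theorem scl_w (a b c d : ℤ) : scl a b c d wP = C (q ^ d) * wP := by
  simp [scl, wP]

theorem scl_scl (a b c d a' b' c' d' : ℤ) (P : P4) :
    scl a b c d (scl a' b' c' d' P) = scl (a + a') (b + b') (c + c') (d + d') P := by
  have : (scl a b c d).comp (scl a' b' c' d') = scl (a + a') (b + b') (c + c') (d + d') := by
    apply MvPolynomial.algHom_ext
    intro i
    fin_cases i
    · simpa [xP, scl_C, zpow_add₀ q_ne, mul_assoc, mul_comm, mul_left_comm, scl_x] using by
        change scl a b c d (scl a' b' c' d' xP) = scl (a + a') (b + b') (c + c') (d + d') xP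
        simp only [scl_x, map_mul, scl_C, zpow_add₀ q_ne]; ring
    · change scl a b c d (scl a' b' c' d' yP) = scl (a + a') (b + b') (c + c') (d + d') yP
      simp only [scl_y, map_mul, scl_C, zpow_add₀ q_ne]; ring
    · change scl a b c d (scl a' b' c' d' zP) = scl (a + a') (b + b') (c + c') (d + d') zP
      simp only [scl_z, map_mul, scl_C, zpow_add₀ q_ne]; ring
    · change scl a b c d (scl a' b' c' d' wP) = scl (a + a') (b + b') (c + c') (d + d') wP
      simp only [scl_w, map_mul, scl_C, zpow_add₀ q_ne]; ring
  exact DFunLike.congr_fun this P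

/-- The embedding of the polynomial ring into its field of fractions. -/
abbrev toF : P4 →+* FractionRing P4 := algebraMap P4 (FractionRing P4)

theorem toF_inj : Function.Injective toF := IsFractionRing.injective P4 (FractionRing P4)

theorem toF_C_zpow (r : K) (n : ℤ) : toF (C (r ^ n)) = (toF (C r)) ^ n :=
  map_zpow₀ (toF.comp C) r n

theorem toF_q_ne : toF (C q) ≠ 0 := by
  have := (map_ne_zero (toF.comp C)).2 q_ne
  exact this

/-- The left hand side of E53 for a polynomial `P`. -/
def E53 (b c : ℤ) (P : P4) : P4 :=
  - C (q ^ (-2 * (b + 2 * c))) * xP * yP * scl 0 0 0 2 P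
    + (xP - 1) * scl (-4) 2 0 0 P
    + C (q ^ (-4 * c)) * xP * (yP - 1) * scl 0 (-2) 4 0 P
    + P

/-- E53 at a rescaled point, in the field of fractions. -/
theorem E53_scl {b c : ℤ} {P : P4} (h : E53 b c P = 0) (i j k l : ℤ) :
    toF (scl i j k l (E53 b c P)) = 0 := by
  rw [h, map_zero, map_zero]

set_option maxHeartbeats 4000000 in
theorem step_b (b : ℤ) (P : P4) (h : E53 b 0 P = 0) :
    E53 (b + 1) 0 (
      C (q ^ (4 * b)) * wP * yP * (zP - 1) * scl 0 0 (-4) 0 P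
    + C (q ^ (4 * b)) * wP * xP * (yP - 1) * yP * zP * scl 0 (-2) 0 0 P
    + C (q ^ (6 * b)) * (wP - 1) * (yP - 1) * scl 0 (-2) 0 (-2) P
    + C (q ^ (4 * b)) * wP * (xP - 1) * yP * (zP - 1) * scl (-4) 2 (-4) 0 P
    + C (q ^ (6 * b)) * (wP - 1) * (xP - 1) * yP * scl (-4) 0 0 (-2) P) = 0 := by
  have h1 := E53_scl h 0 0 (-4) 0
  have h2 := E53_scl h 0 (-2) 0 0
  have h3 := E53_scl h 0 (-2) 0 (-2)
  have h4 := E53_scl h (-4) 2 (-4) 0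
  have h5 := E53_scl h (-4) 0 0 (-2)
  apply toF_inj
  rw [map_zero]
  have hu := toF_q_ne
  have hB : toF (C q) ^ b ≠ 0 := zpow_ne_zero _ hu
  simp only [E53, map_add, map_sub, map_mul, map_neg, map_one, scl_C, scl_x, scl_y, scl_z, scl_w,
    scl_scl, toF_C_zpow] at h1 h2 h3 h4 h5 ⊢
  norm_num only [zpow_add₀ hu, zpow_mul', zpow_one] at h1 h2 h3 h4 h5 ⊢
  generalize toF (C q) ^ b = B at *
  generalize toF (C q) = u at *
  generalize toF xP = x at *
  generalize toF yP = y at *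
  generalize toF zP = z at *
  generalize toF wP = w at *
  linear_combination (norm := skip) B ^ 4 * w * y * (z - 1) * h1
    + u ^ 2 * B ^ 4 * w * x * (y - 1) * y * z * h2
    + B ^ 6 * (w - 1) * (y - 1) * h3
    + u ^ 2 * B ^ 4 * w * (x - 1) * y * (z - 1) * h4
    + u ^ 2 * B ^ 6 * (w - 1) * (x - 1) * y * h5
  clear h1 h2 h3 h4 h5
  field_simp
  ring

set_option maxHeartbeats 4000000 in
theorem step_c (b c : ℤ) (P : P4) (h : E53 b c P = 0) :
    E53 b (c + 1) (
      - (C (q ^ (4 * b + 8 * c)) * wP ^ 2 * yP * (zP - 1) * zP)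
          * scl 0 0 (-4) 0 P
    + (C (q ^ (4 * b + 4 * c - 2)) * wP * xP * (yP - 1) * zP)
          * (C (q ^ (2 * b + 4 * c + 4)) - C (q ^ (2 : ℤ)) * wP * yP * zP)
          * scl 0 (-2) 0 0 P
    - (C (q ^ (6 * b + 8 * c)) * (wP - 1) * wP * (yP - 1) * zP)
          * scl 0 (-2) 0 (-2) P
    + (C (q ^ (4 * b + 8 * c - 2)) * wP * (xP - 1) * (zP - 1))
          * (C (q ^ (2 * b + 4 * c + 4)) - C (q ^ (2 : ℤ)) * wP * yP * zP)
          * scl (-4) 2 (-4) 0 P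
    + (C (q ^ (6 * b + 8 * c - 2)) * (wP - 1) * (xP - 1))
          * (C (q ^ (2 * b + 4 * c + 4)) - C (q ^ (2 : ℤ)) * wP * yP * zP)
          * scl (-4) 0 0 (-2) P) = 0 := by
  have h1 := E53_scl h 0 0 (-4) 0
  have h2 := E53_scl h 0 (-2) 0 0
  have h3 := E53_scl h 0 (-2) 0 (-2)
  have h4 := E53_scl h (-4) 2 (-4) 0
  have h5 := E53_scl h (-4) 0 0 (-2)
  apply toF_inj
  rw [map_zero]
  have hu := toF_q_ne
  have hB : toF (C q) ^ b ≠ 0 := zpow_ne_zero _ hu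
  have hD : toF (C q) ^ c ≠ 0 := zpow_ne_zero _ hu
  simp only [E53, map_add, map_sub, map_mul, map_neg, map_one, map_pow, scl_C, scl_x, scl_y,
    scl_z, scl_w, scl_scl, toF_C_zpow] at h1 h2 h3 h4 h5 ⊢
  norm_num only [zpow_add₀ hu, zpow_sub₀ hu, zpow_mul', zpow_one] at h1 h2 h3 h4 h5 ⊢
  generalize toF (C q) ^ b = B at *
  generalize toF (C q) ^ c = D at *
  generalize toF (C q) = u at *
  generalize toF xP = x at *
  generalize toF yP = y at *
  generalize toF zP = z at *
  generalize toF wP = w at *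
  linear_combination (norm := skip) -(B ^ 4 * D ^ 8 * w ^ 2 * y * (z - 1) * z) * h1
    + B ^ 4 * D ^ 4 * u⁻¹ ^ 2 * w * x * (y - 1) * z
        * (B ^ 2 * D ^ 4 * u ^ 4 - u ^ 4 * w * y * z) * h2
    - B ^ 6 * D ^ 8 * (w - 1) * w * (y - 1) * z * h3
    + B ^ 4 * D ^ 8 * u⁻¹ ^ 2 * w * (x - 1) * (z - 1)
        * (B ^ 2 * D ^ 4 * u ^ 4 - u ^ 4 * w * y * z) * h4
    + B ^ 6 * D ^ 8 * u⁻¹ ^ 2 * (w - 1) * (x - 1)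
        * (B ^ 2 * D ^ 4 * u ^ 4 - u ^ 4 * w * y * z) * h5
  clear h1 h2 h3 h4 h5
  field_simp
  ring

theorem E53_all (b c : ℕ) : E53 b c (Q b c) = 0 := by
  induction c with
  | zero =>
    simp only [Q, Nat.cast_zero]
    induction b with
    | zero =>
      simp only [E53, Qb0, map_one, Nat.cast_zero, mul_zero, add_zero, zpow_zero]
      ring
    | succ b ih =>
      have := step_b b _ ih
      rw [Qb0]
      push_cast
      exact this
  | succ c ih =>
    have := step_c b c _ ih
    rw [Q]
    push_cast
    exact this

/-- the q-difference equation E53 for `Q_{b,c}`. -/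
theorem Q_E53 (b c : ℕ) :
    - C (q ^ (-2 * ((b : ℤ) + 2 * (c : ℤ)))) * xP * yP * scl 0 0 0 2 (Q b c)
    + (xP - 1) * scl (-4) 2 0 0 (Q b c)
    + C (q ^ (-4 * (c : ℤ))) * xP * (yP - 1) * scl 0 (-2) 4 0 (Q b c)
    + Q b c = 0 := by
  exact E53_all b c
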